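/- Let n ≥ 1, 1 ≤ p₁ ≤ p₂ < ∞, 0 < s₁ ≤ s₂ < ∞, and q ∈ [1,∞). Then there is a constant C > 0 such that for every Schwartz function u on ℝⁿ and every t ∈ (0,1], ‖e^{tΔ}u‖_{B^{s₂}_{p₂,q}} ≤ C t^{−(s₂ − s₁ + n/p₁ − n/p₂)/2} ‖u‖_{B^{s₁}_{p₁,q}}. -/

import Mathlib

open MeasureTheory Real Filter
open scoped ENNReal FourierTransform

noncomputable section

/-- `ℝⁿ` as a Euclidean space. -/
abbrev Rn (n : ℕ) : Type := EuclideanSpace ℝ (Fin n)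

variable {n : ℕ}

/-- The Fourier transform of a real-valued Schwartz function, viewed as a ℂ-valued function. -/
def ftC (f : SchwartzMap (Rn n) ℝ) : Rn n → ℂ :=
  𝓕 (fun x => (f x : ℂ))

/-- `ψ₀` is a Littlewood–Paley function: an even, radial Schwartz function whose Fourier
transform is nonnegative, supported in the annulus `{ξ : 1/2 < ‖ξ‖ < 2}`, and satisfies
`∑_{j ∈ ℤ} ψ̂₀(2^{-j} ξ) = 1` for `ξ ≠ 0`. -/
structure IsLPF (n : ℕ) (ψ₀ : SchwartzMap (Rn n) ℝ) : Prop where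
  even : ∀ x : Rn n, ψ₀ (-x) = ψ₀ x
  radial : ∀ x y : Rn n, ‖x‖ = ‖y‖ → ψ₀ x = ψ₀ y
  ft_im : ∀ ξ : Rn n, (ftC ψ₀ ξ).im = 0
  ft_nonneg : ∀ ξ : Rn n, 0 ≤ (ftC ψ₀ ξ).re
  ft_supp : ∀ ξ : Rn n, ftC ψ₀ ξ ≠ 0 → 1/2 < ‖ξ‖ ∧ ‖ξ‖ < 2
  ft_sum : ∀ ξ : Rn n, ξ ≠ 0 → HasSum (fun j : ℤ => ftC ψ₀ ((2:ℝ) ^ (-j) • ξ)) 1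

/-- The Littlewood–Paley kernel `ψ_j(x) = 2^{jn} ψ₀(2^j x)`, whose Fourier transform is
`ψ̂₀(2^{-j} ξ)`. -/
def lpKernel (ψ₀ : SchwartzMap (Rn n) ℝ) (j : ℤ) (x : Rn n) : ℝ :=
  (2:ℝ) ^ (j * (n:ℤ)) * ψ₀ ((2:ℝ) ^ j • x)

/-- The Littlewood–Paley projection `Δ_j f = ψ_j ∗ f`. -/
def lpProj (ψ₀ : SchwartzMap (Rn n) ℝ) (j : ℤ) (f : Rn n → ℝ) : Rn n → ℝ :=
  MeasureTheory.convolution (lpKernel ψ₀ j) f (ContinuousLinearMap.mul ℝ ℝ) volume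

/-- `S_j f = ∑_{m ≤ j} Δ_m f`, the low-frequency cutoff; this is the L² function whose
Fourier transform is `(∑_{m ≤ j} ψ̂₀(2^{-m} ξ)) f̂(ξ)`. -/
def lowProj (ψ₀ : SchwartzMap (Rn n) ℝ) (j : ℤ) (f : Rn n → ℝ) (x : Rn n) : ℝ :=
  ∑' m : ℤ, if m ≤ j then lpProj ψ₀ m f x else 0

/-- `Ψ` is the low-frequency piece of the Littlewood–Paley decomposition:
`Ψ̂ = 1 − ∑_{k ≥ 0} ψ̂_k`. -/
def IsLowPiece (ψ₀ Ψ : SchwartzMap (Rn n) ℝ) : Prop :=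
  ∀ ξ : Rn n, ftC Ψ ξ = 1 - ∑' k : ℕ, ftC ψ₀ ((2:ℝ) ^ (-(k:ℤ)) • ξ)

/-- The inhomogeneous Besov norm `‖f‖_{B^s_{p,q}}`, valued in `[0,∞]`:
`‖Ψ∗f‖_{L^p} + (∑_{j ≥ 0} (2^{js} ‖Δ_j f‖_{L^p})^q)^{1/q}`, with the supremum over `j`
replacing the `ℓ^q` sum when `q = ∞`. -/
def besovNorm (ψ₀ Ψ : SchwartzMap (Rn n) ℝ) (s : ℝ) (p q : ℝ≥0∞) (f : Rn n → ℝ) : ℝ≥0∞ :=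
  eLpNorm (MeasureTheory.convolution (fun x => Ψ x) f (ContinuousLinearMap.mul ℝ ℝ) volume)
      p volume +
    (if q = ∞ then
      ⨆ j : ℕ, ENNReal.ofReal ((2:ℝ) ^ ((j:ℝ) * s)) * eLpNorm (lpProj ψ₀ (j:ℤ) f) p volume
    else
      (∑' j : ℕ, (ENNReal.ofReal ((2:ℝ) ^ ((j:ℝ) * s)) *
        eLpNorm (lpProj ψ₀ (j:ℤ) f) p volume) ^ q.toReal) ^ (1 / q.toReal))

/-- The heat semigroup `e^{tΔ} f = h_t ∗ f` with `h_t(x) = (4πt)^{-n/2} e^{-‖x‖²/(4t)}`. -/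
def heatOp (n : ℕ) (t : ℝ) (f : Rn n → ℝ) : Rn n → ℝ :=
  MeasureTheory.convolution
    (fun x : Rn n => (4 * π * t) ^ (-(n:ℝ)/2) * Real.exp (-‖x‖^2 / (4*t))) f
    (ContinuousLinearMap.mul ℝ ℝ) volume

/-- The partial derivative `∂_{x_i} f`. -/
def pderiv' (i : Fin n) (f : Rn n → ℝ) (x : Rn n) : ℝ :=
  fderiv ℝ f x (EuclideanSpace.single i 1)

/-- The Laplacian `Δf = ∑ᵢ ∂²_{x_i} f`. -/
def lapl (f : Rn n → ℝ) (x : Rn n) : ℝ :=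
  ∑ i : Fin n, pderiv' i (pderiv' i f) x

/-! If `𝓕 k` is supported in `r • K` with `K` compact and `0 ∉ K`, then for every `N : ℕ` the heat
symbol on that support is `exp (-4π²t‖ξ‖²) = (t r²)⁻ᴺ * a (r⁻¹ • ξ) * b (√t • ξ)`, where
`a η = ‖η‖⁻²ᴺ` on `K` and `b η = ‖η‖²ᴺ * exp (-4π²‖η‖²)` are fixed Schwartz functions. So
`k ⋆ e^{tΔ}u = m ⋆ (k ⋆ u)`, with `m` a multiple of a convolution of dilated Schwartz functions, and
Young's inequality bounds the `L^{p₂}` norm by `(t r²)⁻ᴺ r^{d (1/p₁ - 1/p₂)} ‖k ⋆ u‖_{L^{p₁}}` up to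
a constant. Taking `N = 0` for `t r² ≤ 1` and `N = ⌈α⌉` for `t r² ≥ 1` gives the same bound with
`(t r²)^{-α}` for any real `α ≥ 0`. With `r = 2ʲ` and `2 α = s₂ - s₁ + d (1/p₁ - 1/p₂)` the powers
of `2ʲ` become `2^{j (s₁ - s₂)}`, which turns the weight `2^{j s₂}` into `2^{j s₁}`; the
low-frequency piece is the case `N = 0`, where `K` may contain the origin.
-/

open scoped Convolution SchwartzMap

section Young

theorem toReal_inv_le_toReal_inv {p₁ p₂ : ℝ≥0∞} (hp₁ : 1 ≤ p₁) (hp₁₂ : p₁ ≤ p₂) :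
    p₂⁻¹.toReal ≤ p₁⁻¹.toReal :=
  ENNReal.toReal_mono (ENNReal.inv_ne_top.2 (one_pos.trans_le hp₁).ne') (ENNReal.inv_le_inv.2 hp₁₂)

theorem toReal_inv_add_toReal_inv {r p s : ℝ≥0∞} (hr : 1 ≤ r) (hp : 1 ≤ p)
    (h : r⁻¹ + p⁻¹ = 1 + s⁻¹) : r⁻¹.toReal + p⁻¹.toReal = 1 + s⁻¹.toReal := by
  have h_top {a : ℝ≥0∞} (ha : 1 ≤ a) : a⁻¹ ≠ ∞ := ENNReal.inv_ne_top.2 (one_pos.trans_le ha).ne'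
  have hs_top : s⁻¹ ≠ ∞ := by
    refine ne_top_of_le_ne_top (ENNReal.add_ne_top.2 ⟨h_top hr, h_top hp⟩) ?_
    rw [h]
    exact le_add_self
  rw [← ENNReal.toReal_add (h_top hr) (h_top hp), h, ENNReal.toReal_add ENNReal.one_ne_top hs_top,
    ENNReal.toReal_one]

theorem exists_young_exponent {p₁ p₂ : ℝ≥0∞} (hp₁ : 1 ≤ p₁) (hp₁₂ : p₁ ≤ p₂) :
    ∃ ρ : ℝ≥0∞, 1 ≤ ρ ∧ ρ⁻¹ + p₁⁻¹ = 1 + p₂⁻¹ := by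
  refine ⟨(1 + p₂⁻¹ - p₁⁻¹)⁻¹, ?_, ?_⟩
  · grw [ENNReal.one_le_inv, tsub_le_iff_right, hp₁₂]
  · rw [inv_inv, tsub_add_cancel_of_le ((ENNReal.inv_le_one.2 hp₁).trans le_self_add)]

variable {G : Type*} [AddCommGroup G] [MeasurableSpace G] [MeasurableAdd₂ G] [MeasurableNeg G]
  {μ : Measure G} [SFinite μ] [μ.IsAddLeftInvariant]

theorem lintegral_lconvolution {f g : G → ℝ≥0∞} (hf : AEMeasurable f μ) (hg : AEMeasurable g μ) :
    ∫⁻ x, (f ⋆ₗ[μ] g) x ∂μ = (∫⁻ x, f x ∂μ) * ∫⁻ x, g x ∂μ := by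
  simp only [lconvolution_def]
  rw [lintegral_lintegral_swap (by fun_prop), ← lintegral_mul_const'' _ hf]
  refine lintegral_congr fun y ↦ ?_
  rw [lintegral_const_mul'' _ (by fun_prop), lintegral_add_left_eq_self]

omit [SFinite μ] in
theorem lintegral_comp_neg_add [μ.IsNegInvariant] (g : G → ℝ≥0∞) (x : G) :
    ∫⁻ y, g (-y + x) ∂μ = ∫⁻ y, g y ∂μ := by
  simpa only [sub_eq_add_neg, add_comm] using lintegral_sub_left_eq_self (μ := μ) g x

/-- The three-function Hölder inequality for
`f y * g z = (f y ^ r * g z ^ p) ^ s⁻¹ * (f y ^ r) ^ (r⁻¹ - s⁻¹) * (g z ^ p) ^ (p⁻¹ - s⁻¹)`. -/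
theorem lconvolution_le_mul_rpow [μ.IsNegInvariant] {f g : G → ℝ≥0∞} (hf : AEMeasurable f μ)
    (hg : AEMeasurable g μ) {r p s : ℝ} (hr : 1 ≤ r) (hp : 1 ≤ p) (hs : 0 < s)
    (h : r⁻¹ + p⁻¹ = 1 + s⁻¹) (x : G) :
    (f ⋆ₗ[μ] g) x ≤ ((fun y ↦ f y ^ r) ⋆ₗ[μ] fun y ↦ g y ^ p) x ^ s⁻¹ *
      ((∫⁻ y, f y ^ r ∂μ) ^ (r⁻¹ - s⁻¹) * (∫⁻ y, g y ^ p ∂μ) ^ (p⁻¹ - s⁻¹)) := by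
  have hr₀ : 0 < r := one_pos.trans_le hr
  have hp₀ : 0 < p := one_pos.trans_le hp
  have hs₀ : 0 ≤ s⁻¹ := (inv_pos.2 hs).le
  have hrs : 0 ≤ r⁻¹ - s⁻¹ := by linarith [inv_le_one_of_one_le₀ hp]
  have hps : 0 ≤ p⁻¹ - s⁻¹ := by linarith [inv_le_one_of_one_le₀ hr]
  have factor (a b : ℝ≥0∞) :
      (a ^ r * b ^ p) ^ s⁻¹ * ((a ^ r) ^ (r⁻¹ - s⁻¹) * (b ^ p) ^ (p⁻¹ - s⁻¹)) = a * b := by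
    rw [ENNReal.mul_rpow_of_nonneg _ _ hs₀, mul_mul_mul_comm,
      ← ENNReal.rpow_add_of_nonneg _ _ hs₀ hrs, ← ENNReal.rpow_add_of_nonneg _ _ hs₀ hps,
      add_sub_cancel, add_sub_cancel, ENNReal.rpow_rpow_inv hr₀.ne', ENNReal.rpow_rpow_inv hp₀.ne']
  have hf_r : AEMeasurable (fun y ↦ f y ^ r) μ := by fun_prop
  have hg_p : AEMeasurable (fun y ↦ g (-y + x) ^ p) μ := by fun_prop
  have holder := ENNReal.lintegral_prod_norm_pow_le (μ := μ) Finset.univ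
    (f := ![fun y ↦ f y ^ r * g (-y + x) ^ p, fun y ↦ f y ^ r, fun y ↦ g (-y + x) ^ p])
    (p := ![s⁻¹, r⁻¹ - s⁻¹, p⁻¹ - s⁻¹])
    (fun i _ ↦ by fin_cases i; exacts [hf_r.mul hg_p, hf_r, hg_p])
    (by simpa [Fin.sum_univ_succ] using by linarith)
    (fun i _ ↦ by fin_cases i; exacts [hs₀, hrs, hps])
  simpa [Fin.prod_univ_succ, factor, lconvolution_def,
    lintegral_comp_neg_add fun y ↦ g y ^ p] using holder

theorem lintegral_lconvolution_rpow_le [μ.IsNegInvariant] {f g : G → ℝ≥0∞}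
    (hf : AEMeasurable f μ) (hg : AEMeasurable g μ) {r p s : ℝ} (hr : 1 ≤ r) (hp : 1 ≤ p)
    (hs : 0 < s) (h : r⁻¹ + p⁻¹ = 1 + s⁻¹) :
    (∫⁻ x, (f ⋆ₗ[μ] g) x ^ s ∂μ) ^ s⁻¹ ≤
      (∫⁻ x, f x ^ r ∂μ) ^ r⁻¹ * (∫⁻ x, g x ^ p ∂μ) ^ p⁻¹ := by
  have hs₀ : 0 ≤ s⁻¹ := (inv_pos.2 hs).le
  have hrs : 0 ≤ r⁻¹ - s⁻¹ := by linarith [inv_le_one_of_one_le₀ hp]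
  have hps : 0 ≤ p⁻¹ - s⁻¹ := by linarith [inv_le_one_of_one_le₀ hr]
  set A := ∫⁻ x, f x ^ r ∂μ
  set B := ∫⁻ x, g x ^ p ∂μ
  set h := (fun y ↦ f y ^ r) ⋆ₗ[μ] fun y ↦ g y ^ p
  have h_meas : AEMeasurable h μ := by fun_prop
  calc (∫⁻ x, (f ⋆ₗ[μ] g) x ^ s ∂μ) ^ s⁻¹
      ≤ (∫⁻ x, (h x ^ s⁻¹ * (A ^ (r⁻¹ - s⁻¹) * B ^ (p⁻¹ - s⁻¹))) ^ s ∂μ) ^ s⁻¹ := by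
        gcongr with x
        exact lconvolution_le_mul_rpow hf hg hr hp hs ‹_› x
    _ = (∫⁻ x, h x ∂μ) ^ s⁻¹ * (A ^ (r⁻¹ - s⁻¹) * B ^ (p⁻¹ - s⁻¹)) := by
        simp only [ENNReal.mul_rpow_of_nonneg _ _ hs.le, ENNReal.rpow_inv_rpow hs.ne']
        rw [lintegral_mul_const'' _ h_meas, ← ENNReal.mul_rpow_of_nonneg _ _ hs.le,
          ENNReal.mul_rpow_of_nonneg _ _ hs₀, ENNReal.rpow_rpow_inv hs.ne']
    _ = A ^ r⁻¹ * B ^ p⁻¹ := by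
        rw [lintegral_lconvolution (by fun_prop) (by fun_prop), ENNReal.mul_rpow_of_nonneg _ _ hs₀,
          mul_mul_mul_comm, ← ENNReal.rpow_add_of_nonneg _ _ hs₀ hrs,
          ← ENNReal.rpow_add_of_nonneg _ _ hs₀ hps, add_sub_cancel, add_sub_cancel]

variable {𝕜 E E' F : Type*} [NontriviallyNormedField 𝕜] [NormedAddCommGroup E]
  [NormedAddCommGroup E'] [NormedAddCommGroup F] [NormedSpace 𝕜 E] [NormedSpace 𝕜 E']
  [NormedSpace 𝕜 F] [NormedSpace ℝ F] (L : E →L[𝕜] E' →L[𝕜] F)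

omit [MeasurableAdd₂ G] [MeasurableNeg G] [SFinite μ] [μ.IsAddLeftInvariant] in
theorem enorm_convolution_le (f : G → E) (g : G → E') (x : G) :
    ‖(f ⋆[L, μ] g) x‖ₑ ≤ ‖L‖ₑ * ((‖f ·‖ₑ) ⋆ₗ[μ] (‖g ·‖ₑ)) x := by
  rw [lconvolution_def, ← lintegral_const_mul' _ _ enorm_ne_top]
  refine (enorm_integral_le_lintegral_enorm _).trans (lintegral_mono fun y ↦ ?_)
  rw [neg_add_eq_sub, ← mul_assoc]
  exact L.le_opENorm₂ (f y) (g (x - y))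

omit [SFinite μ] in
theorem lconvolution_enorm_le_of_holderConjugate [μ.IsNegInvariant] {f : G → E} {g : G → E'}
    (hf : AEStronglyMeasurable f μ) (hg : AEStronglyMeasurable g μ) (r p : ℝ≥0∞)
    [r.HolderConjugate p] (x : G) :
    ((‖f ·‖ₑ) ⋆ₗ[μ] (‖g ·‖ₑ)) x ≤ eLpNorm f r μ * eLpNorm g p μ := by
  have hx := Measure.measurePreserving_sub_left μ x
  have holder := eLpNorm_le_eLpNorm_mul_eLpNorm_of_nnnorm (p := r) (q := p) (r := 1) hf
    (hg.comp_measurePreserving hx) (fun a b ↦ ‖a‖ * ‖b‖) 1 (.of_forall fun y ↦ by simp)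
  simpa [eLpNorm_one_eq_lintegral_enorm, lconvolution_def, neg_add_eq_sub, enorm_mul,
    eLpNorm_comp_measurePreserving hg hx] using holder

theorem eLpNorm_convolution_le [μ.IsNegInvariant] {f : G → E} {g : G → E'}
    (hf : AEStronglyMeasurable f μ) (hg : AEStronglyMeasurable g μ) {r p s : ℝ≥0∞}
    (hr : 1 ≤ r) (hp : 1 ≤ p) (h : r⁻¹ + p⁻¹ = 1 + s⁻¹) :
    eLpNorm (f ⋆[L, μ] g) s μ ≤ ‖L‖ₑ * (eLpNorm f r μ * eLpNorm g p μ) := by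
  rcases eq_or_ne s ∞ with rfl | hs
  · have : r.HolderConjugate p := ⟨by simpa using h⟩
    refine eLpNormEssSup_le_of_ae_enorm_bound (.of_forall fun x ↦ ?_)
    grw [enorm_convolution_le, lconvolution_enorm_le_of_holderConjugate hf hg r p x]
  have hs_inv : s⁻¹ ≠ 0 := ENNReal.inv_ne_zero.2 hs
  have hsr : s⁻¹ ≤ r⁻¹ := (ENNReal.add_le_add_iff_left ENNReal.one_ne_top).1 <| by
    grw [← h, ← ENNReal.inv_le_one.2 hp, add_comm]
  have hsp : s⁻¹ ≤ p⁻¹ := (ENNReal.add_le_add_iff_left ENNReal.one_ne_top).1 <| by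
    grw [← h, ← ENNReal.inv_le_one.2 hr]
  have hr_top : r ≠ ∞ := ENNReal.inv_ne_zero.1 fun h₀ ↦ hs_inv (le_zero_iff.1 (h₀ ▸ hsr))
  have hp_top : p ≠ ∞ := ENNReal.inv_ne_zero.1 fun h₀ ↦ hs_inv (le_zero_iff.1 (h₀ ▸ hsp))
  have hs₀ : s ≠ 0 := (one_pos.trans_le (hr.trans (ENNReal.inv_le_inv.1 hsr))).ne'
  have h_real : r.toReal⁻¹ + p.toReal⁻¹ = 1 + s.toReal⁻¹ := by
    simpa only [ENNReal.toReal_inv] using toReal_inv_add_toReal_inv hr hp h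
  have young := lintegral_lconvolution_rpow_le hf.enorm hg.enorm (ENNReal.toReal_mono hr_top hr)
    (ENNReal.toReal_mono hp_top hp) (ENNReal.toReal_pos hs₀ hs) h_real
  calc eLpNorm (f ⋆[L, μ] g) s μ
      ≤ ‖L‖ₑ * eLpNorm ((‖f ·‖ₑ) ⋆ₗ[μ] (‖g ·‖ₑ)) s μ :=
        eLpNorm_le_nnreal_smul_eLpNorm_of_ae_le_mul'
          (.of_forall fun x ↦ enorm_convolution_le L f g x) s
    _ ≤ ‖L‖ₑ * (eLpNorm f r μ * eLpNorm g p μ) := by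
        rw [eLpNorm_eq_lintegral_rpow_enorm_toReal hs₀ hs,
          eLpNorm_eq_lintegral_rpow_enorm_toReal (one_pos.trans_le hr).ne' hr_top,
          eLpNorm_eq_lintegral_rpow_enorm_toReal (one_pos.trans_le hp).ne' hp_top]
        simp only [one_div, enorm_eq_self]
        gcongr

theorem aestronglyMeasurable_convolution {f : G → E} {g : G → E'}
    (hf : AEStronglyMeasurable f μ) (hg : AEStronglyMeasurable g μ) :
    AEStronglyMeasurable (f ⋆[L, μ] g) μ :=
  (hf.convolution_integrand L hg).integral_prod_right'

theorem memLp_convolution [μ.IsNegInvariant] {f : G → E} {g : G → E'} {r p s : ℝ≥0∞}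
    (hf : MemLp f r μ) (hg : MemLp g p μ) (hr : 1 ≤ r) (hp : 1 ≤ p) (h : r⁻¹ + p⁻¹ = 1 + s⁻¹) :
    MemLp (f ⋆[L, μ] g) s μ :=
  ⟨aestronglyMeasurable_convolution L hf.1 hg.1,
    (eLpNorm_convolution_le L hf.1 hg.1 hr hp h).trans_lt <|
      ENNReal.mul_lt_top enorm_lt_top (ENNReal.mul_lt_top hf.2 hg.2)⟩

omit [NormedSpace ℝ F] in
theorem convolutionExists_of_memLp [μ.IsNegInvariant] {f : G → E} {g : G → E'} (r p : ℝ≥0∞)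
    [r.HolderConjugate p] (hf : MemLp f r μ) (hg : MemLp g p μ) :
    ConvolutionExists f g L μ := by
  intro x
  refine ⟨hf.1.convolution_integrand_snd L hg.1 x, ?_⟩
  calc ∫⁻ y, ‖L (f y) (g (x - y))‖ₑ ∂μ
      ≤ ∫⁻ y, ‖L‖ₑ * (‖f y‖ₑ * ‖g (-y + x)‖ₑ) ∂μ := lintegral_mono fun y ↦ by
        rw [neg_add_eq_sub, ← mul_assoc]
        exact L.le_opENorm₂ (f y) (g (x - y))
    _ = ‖L‖ₑ * ((‖f ·‖ₑ) ⋆ₗ[μ] (‖g ·‖ₑ)) x := lintegral_const_mul' _ _ enorm_ne_top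
    _ ≤ ‖L‖ₑ * (eLpNorm f r μ * eLpNorm g p μ) := by
        gcongr
        exact lconvolution_enorm_le_of_holderConjugate hf.1 hg.1 r p x
    _ < ∞ := ENNReal.mul_lt_top enorm_lt_top (ENNReal.mul_lt_top hf.2 hg.2)

theorem convolution_assoc_of_memLp [μ.IsNegInvariant] {f g k : G → ℝ} (r p : ℝ≥0∞)
    [r.HolderConjugate p] (hf : Integrable f μ) (hg : Integrable g μ) (hg' : MemLp g r μ)
    (hk : MemLp k p μ) :
    (f ⋆[ContinuousLinearMap.mul ℝ ℝ, μ] g) ⋆[ContinuousLinearMap.mul ℝ ℝ, μ] k =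
      f ⋆[ContinuousLinearMap.mul ℝ ℝ, μ] (g ⋆[ContinuousLinearMap.mul ℝ ℝ, μ] k) := by
  have h_inv : r⁻¹ + p⁻¹ = 1 + ∞⁻¹ := by simpa using ENNReal.HolderConjugate.inv_add_inv_eq_one r p
  have hgk : MemLp ((‖g ·‖) ⋆[ContinuousLinearMap.mul ℝ ℝ, μ] (‖k ·‖)) ∞ μ :=
    memLp_convolution _ hg'.norm hk.norm (ENNReal.HolderConjugate.one_le r p)
      (ENNReal.HolderConjugate.one_le p r) h_inv
  funext x
  exact convolution_assoc _ _ _ _ mul_assoc hf.1 hg.1 hk.1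
    (hf.ae_convolution_exists _ hg)
    (.of_forall (convolutionExists_of_memLp _ r p hg'.norm hk.norm))
    (convolutionExists_of_memLp _ 1 ∞ (memLp_one_iff_integrable.2 hf.norm) hgk x)

end Young

section Gaussian

variable {E : Type*} [NormedAddCommGroup E]

theorem exists_norm_iteratedFDeriv_exp_comp_le [NormedSpace ℝ E] {f : E → ℝ}
    (hf : f.HasTemperateGrowth) (m : ℕ) :
    ∃ (k : ℕ) (C : ℝ), 0 ≤ C ∧
      ∀ x, ‖iteratedFDeriv ℝ m (fun x ↦ exp (f x)) x‖ ≤ C * (1 + ‖x‖) ^ k * exp (f x) := by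
  obtain ⟨k, C, hC, h_bound⟩ := hf.norm_iteratedFDeriv_le_uniform m
  refine ⟨k * m, m.factorial * (1 + C) ^ m, by positivity, fun x ↦ ?_⟩
  set D := (1 + C) * (1 + ‖x‖) ^ k
  have hD : 1 ≤ D :=
    one_le_mul_of_one_le_of_one_le (by linarith) (one_le_pow₀ (by linarith [norm_nonneg x]))
  have h_exp (i : ℕ) (_ : i ≤ m) : ‖iteratedFDeriv ℝ i exp (f x)‖ ≤ exp (f x) := by
    rw [norm_iteratedFDeriv_eq_norm_iteratedDeriv, iteratedDeriv_eq_iterate, Real.iter_deriv_exp,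
      Real.norm_of_nonneg (exp_pos _).le]
  have h_inner (i : ℕ) (hi₁ : 1 ≤ i) (hi : i ≤ m) : ‖iteratedFDeriv ℝ i f x‖ ≤ D ^ i :=
    calc ‖iteratedFDeriv ℝ i f x‖ ≤ C * (1 + ‖x‖) ^ k := h_bound i hi x
      _ ≤ D := mul_le_mul_of_nonneg_right (by linarith) (by positivity)
      _ ≤ D ^ i := le_self_pow₀ hD (by lia)
  calc ‖iteratedFDeriv ℝ m (exp ∘ f) x‖ ≤ m.factorial * exp (f x) * D ^ m :=
        norm_iteratedFDeriv_comp_le contDiff_exp hf.1 (by exact_mod_cast le_top) x h_exp h_inner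
    _ = m.factorial * (1 + C) ^ m * (1 + ‖x‖) ^ (k * m) * exp (f x) := by
        rw [mul_pow, ← pow_mul]
        ring

theorem one_add_pow_mul_exp_neg_mul_sq_le {c : ℝ} (hc : 0 < c) (k : ℕ) {r : ℝ} (hr : 0 ≤ r) :
    (1 + r) ^ k * exp (-c * r ^ 2) ≤ exp (k ^ 2 / (4 * c)) :=
  calc (1 + r) ^ k * exp (-c * r ^ 2) ≤ exp r ^ k * exp (-c * r ^ 2) := by
        gcongr
        linarith [add_one_le_exp r]
    _ = exp (k * r - c * r ^ 2) := by rw [← exp_nat_mul, ← exp_add]; ring_nf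
    _ ≤ exp (k ^ 2 / (4 * c)) := by
        gcongr
        rw [le_div_iff₀ (by positivity)]
        linarith [sq_nonneg (2 * c * r - k)]

variable [InnerProductSpace ℝ E]

theorem hasTemperateGrowth_mul_norm_sq (c : ℝ) :
    (fun x : E ↦ c * ‖x‖ ^ 2).HasTemperateGrowth :=
  (Function.HasTemperateGrowth.const c).mul (Function.hasTemperateGrowth_norm_sq E)

/-- The Gaussian `x ↦ exp (-c ‖x‖²)` with `0 < c`, as a Schwartz function. -/
def gaussian {c : ℝ} (hc : 0 < c) : 𝓢(E, ℝ) where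
  toFun x := exp (-c * ‖x‖ ^ 2)
  smooth' := contDiff_exp.comp (hasTemperateGrowth_mul_norm_sq (-c)).1
  decay' l m := by
    obtain ⟨k, C, hC, h_deriv⟩ :=
      exists_norm_iteratedFDeriv_exp_comp_le (hasTemperateGrowth_mul_norm_sq (E := E) (-c)) m
    refine ⟨C * exp ((l + k : ℕ) ^ 2 / (4 * c)), fun x ↦ ?_⟩
    calc ‖x‖ ^ l * ‖iteratedFDeriv ℝ m (fun x ↦ exp (-c * ‖x‖ ^ 2)) x‖
        ≤ (1 + ‖x‖) ^ l * (C * (1 + ‖x‖) ^ k * exp (-c * ‖x‖ ^ 2)) := by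
          gcongr
          · linarith
          · exact h_deriv x
      _ = C * ((1 + ‖x‖) ^ (l + k) * exp (-c * ‖x‖ ^ 2)) := by ring
      _ ≤ C * exp ((l + k : ℕ) ^ 2 / (4 * c)) := by
          gcongr
          exact one_add_pow_mul_exp_neg_mul_sq_le hc _ (norm_nonneg x)

theorem gaussian_apply {c : ℝ} (hc : 0 < c) (x : E) : gaussian hc x = exp (-c * ‖x‖ ^ 2) := rfl

end Gaussian

section Dilation
open Module (finrank)

variable {V F F' : Type*} [NormedAddCommGroup V] [InnerProductSpace ℝ V]
  [NormedAddCommGroup F] [NormedSpace ℝ F] [NormedAddCommGroup F'] [NormedSpace ℂ F']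

/-- The dilation `x ↦ r ^ d • f (r • x)`, `d = dim V`, which has the same integral as `f`. -/
def dilate {r : ℝ} (hr : 0 < r) (f : 𝓢(V, F)) : 𝓢(V, F) :=
  r ^ finrank ℝ V •
    SchwartzMap.compCLMOfContinuousLinearEquiv ℝ
      (ContinuousLinearEquiv.smulLeft (Units.mk0 r hr.ne') : V ≃L[ℝ] V) f

theorem dilate_apply {r : ℝ} (hr : 0 < r) (f : 𝓢(V, F)) (x : V) :
    dilate hr f x = r ^ finrank ℝ V • f (r • x) := rfl

variable [FiniteDimensional ℝ V] [MeasurableSpace V] [BorelSpace V]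

theorem fourier_dilate {r : ℝ} (hr : 0 < r)
    (f : 𝓢(V, F')) (ξ : V) : 𝓕 (dilate hr f) ξ = 𝓕 f (r⁻¹ • ξ) := by
  rw [SchwartzMap.fourier_coe, SchwartzMap.fourier_coe, Real.fourier_eq, Real.fourier_eq]
  have h := Measure.integral_comp_smul (volume : Measure V)
    (fun y ↦ 𝐞 (-inner ℝ y (r⁻¹ • ξ)) • f y) r
  simp only [real_inner_smul_left, real_inner_smul_right, inv_mul_cancel_left₀ hr.ne'] at h
  simp only [dilate_apply, smul_comm _ (r ^ finrank ℝ V), integral_smul, real_inner_smul_right, h]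
  rw [abs_of_nonneg (by positivity), smul_inv_smul₀ (by positivity)]

omit [NormedSpace ℝ F] in
theorem eLpNorm_comp_smul {r : ℝ} (hr : 0 < r) (f : V → F) (p : ℝ≥0∞) :
    eLpNorm (fun x ↦ f (r • x)) p volume =
      ENNReal.ofReal (r ^ (-(finrank ℝ V * p⁻¹.toReal))) * eLpNorm f p volume := by
  have h_emb : MeasurableEmbedding (r • · : V → V) :=
    (Homeomorph.smulOfNeZero r hr.ne').measurableEmbedding
  calc eLpNorm (fun x ↦ f (r • x)) p volume
      = eLpNorm f p (Measure.map (r • ·) volume) := (h_emb.eLpNorm_map_measure (g := f)).symm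
    _ = ENNReal.ofReal |(r ^ finrank ℝ V)⁻¹| ^ p⁻¹.toReal * eLpNorm f p volume := by
        rw [Measure.map_addHaar_smul _ hr.ne',
          eLpNorm_smul_measure_of_ne_zero (by positivity), one_div, smul_eq_mul]
    _ = ENNReal.ofReal (r ^ (-(finrank ℝ V * p⁻¹.toReal))) * eLpNorm f p volume := by
        rw [abs_of_nonneg (by positivity), ENNReal.ofReal_rpow_of_pos (by positivity),
          Real.inv_rpow (by positivity), ← Real.rpow_natCast_mul hr.le, Real.rpow_neg hr.le]

theorem eLpNorm_dilate {r : ℝ} (hr : 0 < r) (f : 𝓢(V, F)) (p : ℝ≥0∞) :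
    eLpNorm (dilate hr f) p volume =
      ENNReal.ofReal (r ^ (finrank ℝ V * (1 - p⁻¹.toReal))) * eLpNorm f p volume := by
  have h : (dilate hr f : V → F) = (r ^ finrank ℝ V) • fun x ↦ f (r • x) := rfl
  rw [h, eLpNorm_const_smul, eLpNorm_comp_smul hr, ← mul_assoc, Real.enorm_of_nonneg
    (by positivity), ← ENNReal.ofReal_mul (by positivity), ← Real.rpow_natCast, ← Real.rpow_add hr]
  ring_nf

end Dilation

section Symbol
open scoped Manifold

theorem exists_schwartzMap_mul_eq_one {V : Type*} [NormedAddCommGroup V] [NormedSpace ℝ V]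
    [FiniteDimensional ℝ V] {K : Set V} (hK : IsCompact K) {f : V → ℝ}
    (hf : ContDiff ℝ (⊤ : ℕ∞) f) (hf₀ : ∀ ξ ∈ K, f ξ ≠ 0) :
    ∃ a : 𝓢(V, ℝ), ∀ ξ ∈ K, a ξ * f ξ = 1 := by
  obtain ⟨R, -, hKR⟩ := hK.isBounded.subset_ball_lt 0 0
  obtain ⟨g, hg, -, hg_supp, hg_one⟩ := exists_contMDiff_support_eq_eq_one_iff 𝓘(ℝ, V)
    (n := (⊤ : ℕ∞)) Metric.isOpen_ball hK.isClosed hKR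
  have hg : ContDiff ℝ (⊤ : ℕ∞) g := contMDiff_iff_contDiff.1 hg
  have h_denom (ξ : V) : f ξ ^ 2 + (1 - g ξ) ^ 2 ≠ 0 := by
    intro h
    have hgξ : 1 - g ξ = 0 := by nlinarith [sq_nonneg (f ξ), sq_nonneg (1 - g ξ)]
    exact hf₀ ξ ((hg_one ξ).2 (by linarith)) (by nlinarith [sq_nonneg (f ξ), sq_nonneg (1 - g ξ)])
  have h_smooth : ContDiff ℝ (⊤ : ℕ∞) fun ξ ↦ g ξ * (f ξ / (f ξ ^ 2 + (1 - g ξ) ^ 2)) :=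
    hg.mul (hf.div (by fun_prop) h_denom)
  have h_compact : HasCompactSupport g :=
    .intro (isCompact_closedBall 0 R) fun ξ hξ ↦ Function.notMem_support.1 fun h ↦
      hξ (Metric.ball_subset_closedBall (hg_supp ▸ h))
  refine ⟨h_compact.mul_right.toSchwartzMap h_smooth, fun ξ hξ ↦ ?_⟩
  change g ξ * (f ξ / (f ξ ^ 2 + (1 - g ξ) ^ 2)) * f ξ = 1
  have := hf₀ ξ hξ
  rw [← (hg_one ξ).1 hξ]
  field_simp
  simp

end Symbol

section HeatKernel
open Module (finrank)

variable {V : Type*} [NormedAddCommGroup V]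

/-- A real Schwartz function, viewed as a complex one. -/
def complexify [NormedSpace ℝ V] (f : 𝓢(V, ℝ)) : 𝓢(V, ℂ) := f.postcompCLM Complex.ofRealCLM

variable [InnerProductSpace ℝ V]

/-- The heat kernel `h_t x = (4 π t) ^ (-d / 2) * exp (-‖x‖² / (4 t))`, `d = dim V`. -/
def heatKernel {t : ℝ} (ht : 0 < t) : 𝓢(V, ℝ) :=
  (4 * π * t) ^ (-(finrank ℝ V : ℝ) / 2) • gaussian (c := (4 * t)⁻¹) (by positivity)

theorem heatKernel_apply {t : ℝ} (ht : 0 < t) (x : V) : heatKernel ht x =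
    (4 * π * t) ^ (-(finrank ℝ V : ℝ) / 2) * exp (-‖x‖ ^ 2 / (4 * t)) := by
  rw [heatKernel, smul_apply, gaussian_apply, smul_eq_mul]
  ring_nf

variable [FiniteDimensional ℝ V] [MeasurableSpace V] [BorelSpace V]

theorem fourier_gaussian {c : ℝ} (hc : 0 < c) (ξ : V) :
    𝓕 (complexify (gaussian hc : 𝓢(V, ℝ))) ξ =
      ((π / c) ^ ((finrank ℝ V : ℝ) / 2) * exp (-π ^ 2 * ‖ξ‖ ^ 2 / c) : ℝ) := by
  have h_exp : (complexify (gaussian hc : 𝓢(V, ℝ)) : V → ℂ) =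
      fun x ↦ Complex.exp (-c * ‖x‖ ^ 2) := by
    ext x
    change ((exp (-c * ‖x‖ ^ 2) : ℝ) : ℂ) = _
    push_cast
    rfl
  rw [SchwartzMap.fourier_coe, h_exp,
    fourier_gaussian_innerProductSpace (b := c) (by simpa using hc) ξ, Complex.ofReal_mul,
    Complex.ofReal_cpow (by positivity)]
  push_cast
  rfl

theorem fourier_heatKernel {t : ℝ} (ht : 0 < t) (ξ : V) :
    𝓕 (complexify (heatKernel ht : 𝓢(V, ℝ))) ξ = (exp (-(4 * π ^ 2) * t * ‖ξ‖ ^ 2) : ℝ) := by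
  have h_smul : complexify (heatKernel (V := V) ht) =
      (((4 * π * t) ^ (-(finrank ℝ V : ℝ) / 2) : ℝ) : ℂ) •
        complexify (gaussian (c := (4 * t)⁻¹) (by positivity)) := by
    ext x
    exact Complex.ofReal_mul _ _
  rw [h_smul, FourierTransform.fourier_smul, smul_apply, fourier_gaussian, smul_eq_mul,
    ← Complex.ofReal_mul, ← mul_assoc, div_inv_eq_mul, mul_left_comm, ← mul_assoc,
    ← Real.rpow_add (by positivity), neg_div, neg_add_cancel, Real.rpow_zero, one_mul]
  congr 2
  field_simp

theorem exists_fourier_mul_fourier_eq_heat_symbol {K : Set V} (hK : IsCompact K) (N : ℕ)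
    (hN : ∀ ξ ∈ K, ‖ξ‖ ^ (2 * N) ≠ 0) :
    ∃ A B : 𝓢(V, ℂ), ∀ {r t : ℝ}, 0 < r → 0 < t → ∀ ξ, r⁻¹ • ξ ∈ K →
      𝓕 A (r⁻¹ • ξ) * 𝓕 B (√t • ξ) =
        ((t * r ^ 2) ^ N * exp (-(4 * π ^ 2) * t * ‖ξ‖ ^ 2) : ℝ) := by
  have h_growth : (fun ξ : V ↦ (‖ξ‖ ^ 2) ^ N).HasTemperateGrowth :=
    (Function.hasTemperateGrowth_norm_sq V).pow N
  simp only [pow_mul] at hN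
  obtain ⟨a, ha⟩ := exists_schwartzMap_mul_eq_one hK h_growth.1 hN
  let b : 𝓢(V, ℝ) := SchwartzMap.smulLeftCLM ℝ (fun ξ : V ↦ (‖ξ‖ ^ 2) ^ N)
    (gaussian (c := 4 * π ^ 2) (by positivity))
  have hb (ξ : V) : b ξ = (‖ξ‖ ^ 2) ^ N * exp (-(4 * π ^ 2) * ‖ξ‖ ^ 2) :=
    SchwartzMap.smulLeftCLM_apply_apply h_growth _ ξ
  refine ⟨𝓕⁻ (complexify a), 𝓕⁻ (complexify b), fun {r t} hr ht ξ hξ ↦ ?_⟩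
  rw [FourierTransform.fourier_fourierInv_eq, FourierTransform.fourier_fourierInv_eq]
  change (a (r⁻¹ • ξ) : ℂ) * (b (√t • ξ) : ℂ) = _
  rw [hb, ← Complex.ofReal_mul]
  congr 1
  have h_scale : ‖√t • ξ‖ ^ 2 = t * r ^ 2 * ‖r⁻¹ • ξ‖ ^ 2 := by
    simp only [norm_smul, norm_inv, Real.norm_of_nonneg hr.le,
      Real.norm_of_nonneg (sqrt_nonneg t), mul_pow, sq_sqrt ht.le]
    field_simp
  have h_norm : ‖√t • ξ‖ ^ 2 = t * ‖ξ‖ ^ 2 := by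
    rw [norm_smul, mul_pow, Real.norm_of_nonneg (sqrt_nonneg t), sq_sqrt ht.le]
  calc a (r⁻¹ • ξ) * ((‖√t • ξ‖ ^ 2) ^ N * exp (-(4 * π ^ 2) * ‖√t • ξ‖ ^ 2))
      = (a (r⁻¹ • ξ) * (‖r⁻¹ • ξ‖ ^ 2) ^ N) *
          ((t * r ^ 2) ^ N * exp (-(4 * π ^ 2) * ‖√t • ξ‖ ^ 2)) := by
        nth_rw 1 [h_scale]
        ring
    _ = (t * r ^ 2) ^ N * exp (-(4 * π ^ 2) * t * ‖ξ‖ ^ 2) := by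
        rw [ha _ hξ, one_mul, h_norm, ← mul_assoc]

end HeatKernel

section Multiplier
open Module (finrank)
open ContinuousLinearMap (mul)

variable {V : Type*} [NormedAddCommGroup V] [InnerProductSpace ℝ V] [FiniteDimensional ℝ V]
  [MeasurableSpace V] [BorelSpace V]

theorem convolution_eq_of_fourier_mul_eq {f g k l : 𝓢(V, ℂ)}
    (h : ∀ ξ, 𝓕 f ξ * 𝓕 g ξ = 𝓕 k ξ * 𝓕 l ξ) :
    f ⋆[mul ℂ ℂ, volume] g = k ⋆[mul ℂ ℂ, volume] l := by
  have h_eq : SchwartzMap.convolution (mul ℂ ℂ) f g = SchwartzMap.convolution (mul ℂ ℂ) k l := by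
    refine (FourierTransform.fourierCLE ℂ 𝓢(V, ℂ)).injective (SchwartzMap.ext fun ξ ↦ ?_)
    simpa [SchwartzMap.fourier_convolution] using h ξ
  funext x
  rw [← SchwartzMap.convolution_apply, h_eq, SchwartzMap.convolution_apply]

theorem re_convolution_complexify (f : 𝓢(V, ℂ)) (g : 𝓢(V, ℝ)) (x : V) :
    ((f ⋆[mul ℂ ℂ, volume] complexify g) x).re =
      (f.postcompCLM Complex.reCLM ⋆[mul ℝ ℝ, volume] g) x := by
  have h_exists : ConvolutionExists f (complexify g) (mul ℂ ℂ) volume :=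
    convolutionExists_of_memLp _ 1 ∞ (f.memLp 1) ((complexify g).memLp ∞)
  calc ((f ⋆[mul ℂ ℂ, volume] complexify g) x).re
      = ∫ y, (f y * (g (x - y) : ℂ)).re := (integral_re (h_exists x)).symm
    _ = (f.postcompCLM Complex.reCLM ⋆[mul ℝ ℝ, volume] g) x :=
        integral_congr_ae (.of_forall fun y ↦ Complex.re_mul_ofReal _ _)

theorem convolution_heatKernel_eq {t : ℝ} (ht : 0 < t) {k : 𝓢(V, ℝ)} {M : 𝓢(V, ℂ)}
    (hM : ∀ ξ, 𝓕 (complexify k) ξ ≠ 0 → 𝓕 M ξ = (exp (-(4 * π ^ 2) * t * ‖ξ‖ ^ 2) : ℝ)) :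
    k ⋆[mul ℝ ℝ, volume] heatKernel ht = M.postcompCLM Complex.reCLM ⋆[mul ℝ ℝ, volume] k := by
  have h_fourier (ξ : V) : 𝓕 (complexify k) ξ * 𝓕 (complexify (heatKernel ht : 𝓢(V, ℝ))) ξ =
      𝓕 M ξ * 𝓕 (complexify k) ξ := by
    rcases eq_or_ne (𝓕 (complexify k) ξ) 0 with hk | hk
    · rw [hk, zero_mul, mul_zero]
    · rw [hM ξ hk, fourier_heatKernel, mul_comm]
  funext x
  rw [← re_convolution_complexify, ← convolution_eq_of_fourier_mul_eq h_fourier,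
    re_convolution_complexify]
  rfl

theorem eLpNorm_convolution_dilate_le (A B : 𝓢(V, ℂ)) {r s : ℝ} (hr : 0 < r) (hs : 0 < s)
    {p : ℝ≥0∞} (hp : 1 ≤ p) :
    eLpNorm (SchwartzMap.convolution (mul ℂ ℂ) (dilate hr A) (dilate hs B)) p volume ≤
      ENNReal.ofReal (r ^ (finrank ℝ V * (1 - p⁻¹.toReal))) *
        (eLpNorm A p volume * eLpNorm B 1 volume) := by
  have h_mul : ‖mul ℂ ℂ‖ₑ ≤ 1 := by simp
  calc eLpNorm (SchwartzMap.convolution (mul ℂ ℂ) (dilate hr A) (dilate hs B)) p volume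
      = eLpNorm (dilate hr A ⋆[mul ℂ ℂ, volume] dilate hs B) p volume :=
        congrArg (eLpNorm · p volume) (funext (SchwartzMap.convolution_apply _ _ _))
    _ ≤ ‖mul ℂ ℂ‖ₑ *
          (eLpNorm (dilate hr A) p volume * eLpNorm (dilate hs B) 1 volume) :=
        eLpNorm_convolution_le _ (dilate hr A).continuous.aestronglyMeasurable
          (dilate hs B).continuous.aestronglyMeasurable hp le_rfl (by simp [add_comm])
    _ ≤ eLpNorm (dilate hr A) p volume * eLpNorm (dilate hs B) 1 volume :=
        mul_le_of_le_one_left' h_mul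
    _ = ENNReal.ofReal (r ^ (finrank ℝ V * (1 - p⁻¹.toReal))) *
          (eLpNorm A p volume * eLpNorm B 1 volume) := by
        simp [eLpNorm_dilate, mul_assoc]

theorem exists_heatKernel_multiplier {K : Set V} (hK : IsCompact K) (N : ℕ)
    (hN : ∀ ξ ∈ K, ‖ξ‖ ^ (2 * N) ≠ 0) {ρ : ℝ≥0∞} (hρ : 1 ≤ ρ) :
    ∃ C : ℝ, 0 < C ∧ ∀ {r t : ℝ}, 0 < r → ∀ ht : 0 < t, ∃ m : 𝓢(V, ℝ),
      eLpNorm m ρ volume ≤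
        ENNReal.ofReal (C * (((t * r ^ 2) ^ N)⁻¹ * r ^ (finrank ℝ V * (1 - ρ⁻¹.toReal)))) ∧
      ∀ k : 𝓢(V, ℝ), (∀ ξ, 𝓕 (complexify k) ξ ≠ 0 → r⁻¹ • ξ ∈ K) →
        k ⋆[mul ℝ ℝ, volume] heatKernel ht = m ⋆[mul ℝ ℝ, volume] k := by
  obtain ⟨A, B, hAB⟩ := exists_fourier_mul_fourier_eq_heat_symbol hK N hN
  have hS : eLpNorm A ρ volume * eLpNorm B 1 volume ≠ ∞ :=
    ENNReal.mul_ne_top (A.memLp ρ volume).2.ne (B.memLp 1 volume).2.ne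
  set S := eLpNorm A ρ volume * eLpNorm B 1 volume
  refine ⟨S.toReal + 1, by positivity, fun {r t} hr ht ↦ ?_⟩
  have ht' : 0 < (√t)⁻¹ := by positivity
  have hrt : 0 < (t * r ^ 2) ^ N := by positivity
  set c : ℝ := ((t * r ^ 2) ^ N)⁻¹
  set κ : ℝ := r ^ (finrank ℝ V * (1 - ρ⁻¹.toReal))
  set M : 𝓢(V, ℂ) := SchwartzMap.convolution (mul ℂ ℂ) (dilate hr A) (dilate ht' B) with hM
  refine ⟨(c • M).postcompCLM Complex.reCLM, ?_, fun k hk ↦ ?_⟩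
  · calc eLpNorm ((c • M).postcompCLM Complex.reCLM) ρ volume
        ≤ eLpNorm (c • ⇑M) ρ volume := eLpNorm_mono fun x ↦ Complex.abs_re_le_norm _
      _ ≤ ‖c‖ₑ * (ENNReal.ofReal κ * S) := by
        rw [eLpNorm_const_smul]
        gcongr
        exact eLpNorm_convolution_dilate_le A B hr ht' hρ
      _ = S * ENNReal.ofReal (c * κ) := by
        rw [Real.enorm_of_nonneg (by positivity), ← mul_assoc, mul_comm,
          ENNReal.ofReal_mul (by positivity)]
      _ ≤ ENNReal.ofReal ((S.toReal + 1) * (c * κ)) := by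
        rw [ENNReal.ofReal_mul (p := S.toReal + 1) (by positivity)]
        gcongr
        exact (ENNReal.ofReal_toReal hS).ge.trans (ENNReal.ofReal_le_ofReal (by linarith))
  · refine convolution_heatKernel_eq ht fun ξ hξ ↦ ?_
    calc 𝓕 (c • M) ξ = c • (𝓕 A (r⁻¹ • ξ) * 𝓕 B (√t • ξ)) := by
          rw [FourierTransform.fourier_smul, smul_apply, hM, SchwartzMap.fourier_convolution,
            SchwartzMap.pairing_apply_apply, fourier_dilate, fourier_dilate, inv_inv]
          rfl
      _ = (exp (-(4 * π ^ 2) * t * ‖ξ‖ ^ 2) : ℝ) := by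
          rw [hAB hr ht ξ (hk ξ hξ), Complex.real_smul, ← Complex.ofReal_mul,
            inv_mul_cancel_left₀ hrt.ne']

end Multiplier

section FrequencyLocalized
open Module (finrank)
open ContinuousLinearMap (mul)

variable {V : Type*} [NormedAddCommGroup V] [InnerProductSpace ℝ V] [FiniteDimensional ℝ V]
  [MeasurableSpace V] [BorelSpace V]

theorem convolution_heatKernel_comm {t : ℝ} (ht : 0 < t) {k m : 𝓢(V, ℝ)}
    (hm : k ⋆[mul ℝ ℝ, volume] heatKernel ht = m ⋆[mul ℝ ℝ, volume] k) {p : ℝ≥0∞} (hp : 1 ≤ p)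
    {u : V → ℝ} (hu : MemLp u p) :
    k ⋆[mul ℝ ℝ, volume] (heatKernel ht ⋆[mul ℝ ℝ, volume] u) =
      m ⋆[mul ℝ ℝ, volume] (k ⋆[mul ℝ ℝ, volume] u) := by
  have : p.HolderConjugate p.conjExponent := .conjExponent hp
  have : p.conjExponent.HolderConjugate p := .symm
  have h_assoc (f g : 𝓢(V, ℝ)) := convolution_assoc_of_memLp (μ := volume) p.conjExponent p
    f.integrable g.integrable (g.memLp _) hu
  rw [← h_assoc, hm, h_assoc]

theorem exists_eLpNorm_heat_le_pow {K : Set V} (hK : IsCompact K) (N : ℕ)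
    (hN : ∀ ξ ∈ K, ‖ξ‖ ^ (2 * N) ≠ 0) {p₁ p₂ : ℝ≥0∞} (hp₁ : 1 ≤ p₁) (hp₁₂ : p₁ ≤ p₂) :
    ∃ C : ℝ, 0 < C ∧ ∀ {r t : ℝ}, 0 < r → ∀ (ht : 0 < t) (k : 𝓢(V, ℝ)),
      (∀ ξ, 𝓕 (complexify k) ξ ≠ 0 → r⁻¹ • ξ ∈ K) →
      ∀ {p : ℝ≥0∞}, 1 ≤ p → ∀ {u : V → ℝ}, MemLp u p →
        eLpNorm (k ⋆[mul ℝ ℝ, volume] (heatKernel ht ⋆[mul ℝ ℝ, volume] u)) p₂ volume ≤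
          ENNReal.ofReal (C * (((t * r ^ 2) ^ N)⁻¹ *
            r ^ (finrank ℝ V * (p₁⁻¹.toReal - p₂⁻¹.toReal)))) *
          eLpNorm (k ⋆[mul ℝ ℝ, volume] u) p₁ volume := by
  obtain ⟨ρ, hρ, h_young⟩ := exists_young_exponent hp₁ hp₁₂
  have h_exp : 1 - ρ⁻¹.toReal = p₁⁻¹.toReal - p₂⁻¹.toReal := by
    linarith [toReal_inv_add_toReal_inv hρ hp₁ h_young]
  obtain ⟨C, hC, h_mult⟩ := exists_heatKernel_multiplier hK N hN hρ
  refine ⟨C, hC, fun {r t} hr ht k hk p hp u hu ↦ ?_⟩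
  obtain ⟨m, hm_norm, hm⟩ := h_mult hr ht
  have h_mul : ‖mul ℝ ℝ‖ₑ ≤ 1 := by simp
  rw [h_exp] at hm_norm
  calc eLpNorm (k ⋆[mul ℝ ℝ, volume] (heatKernel ht ⋆[mul ℝ ℝ, volume] u)) p₂ volume
      = eLpNorm (m ⋆[mul ℝ ℝ, volume] (k ⋆[mul ℝ ℝ, volume] u)) p₂ volume := by
        rw [convolution_heatKernel_comm ht (hm k hk) hp hu]
    _ ≤ ‖mul ℝ ℝ‖ₑ * (eLpNorm m ρ volume * eLpNorm (k ⋆[mul ℝ ℝ, volume] u) p₁ volume) :=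
        eLpNorm_convolution_le _ m.continuous.aestronglyMeasurable
          (aestronglyMeasurable_convolution _ k.continuous.aestronglyMeasurable hu.1)
          hρ hp₁ h_young
    _ ≤ _ := by
        grw [h_mul, one_mul, hm_norm]

theorem exists_eLpNorm_heat_le_rpow {K : Set V} (hK : IsCompact K) (hK₀ : (0 : V) ∉ K) {α : ℝ}
    (hα : 0 ≤ α) {p₁ p₂ : ℝ≥0∞} (hp₁ : 1 ≤ p₁) (hp₁₂ : p₁ ≤ p₂) :
    ∃ C : ℝ, 0 < C ∧ ∀ {r t : ℝ}, 0 < r → ∀ (ht : 0 < t) (k : 𝓢(V, ℝ)),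
      (∀ ξ, 𝓕 (complexify k) ξ ≠ 0 → r⁻¹ • ξ ∈ K) →
      ∀ {p : ℝ≥0∞}, 1 ≤ p → ∀ {u : V → ℝ}, MemLp u p →
        eLpNorm (k ⋆[mul ℝ ℝ, volume] (heatKernel ht ⋆[mul ℝ ℝ, volume] u)) p₂ volume ≤
          ENNReal.ofReal (C * ((t * r ^ 2) ^ (-α) *
            r ^ (finrank ℝ V * (p₁⁻¹.toReal - p₂⁻¹.toReal)))) *
          eLpNorm (k ⋆[mul ℝ ℝ, volume] u) p₁ volume := by
  obtain ⟨C₀, hC₀, h₀⟩ := exists_eLpNorm_heat_le_pow hK 0 (by simp) hp₁ hp₁₂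
  obtain ⟨C₁, -, h₁⟩ := exists_eLpNorm_heat_le_pow hK ⌈α⌉₊
    (fun ξ hξ ↦ pow_ne_zero _ (norm_ne_zero_iff.2 fun h ↦ hK₀ (h ▸ hξ))) hp₁ hp₁₂
  refine ⟨max C₀ C₁, by positivity, fun {r t} hr ht k hk p hp u hu ↦ ?_⟩
  have hx : 0 < t * r ^ 2 := by positivity
  set x := t * r ^ 2
  rcases le_total x 1 with hx₁ | hx₁
  · refine (h₀ hr ht k hk hp hu).trans ?_
    gcongr
    · exact le_max_left _ _
    · rw [pow_zero, inv_one]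
      exact one_le_rpow_of_pos_of_le_one_of_nonpos hx hx₁ (neg_nonpos.2 hα)
  · refine (h₁ hr ht k hk hp hu).trans ?_
    gcongr
    · exact le_max_right _ _
    · rw [← Real.rpow_natCast, ← Real.rpow_neg hx.le]
      exact Real.rpow_le_rpow_of_exponent_le hx₁ (neg_le_neg (Nat.le_ceil α))

end FrequencyLocalized

section LittlewoodPaley

theorem fourier_complexify_eq_ftC (f : 𝓢(Rn n, ℝ)) (ξ : Rn n) : 𝓕 (complexify f) ξ = ftC f ξ := by
  rw [SchwartzMap.fourier_coe]
  rfl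

theorem lpKernel_eq_dilate (ψ₀ : 𝓢(Rn n, ℝ)) (j : ℤ) :
    lpKernel ψ₀ j = dilate (zpow_pos two_pos j) ψ₀ := by
  ext x
  rw [dilate_apply, finrank_euclideanSpace_fin, smul_eq_mul, lpKernel, zpow_mul, zpow_natCast]

theorem heatKernel_eq {t : ℝ} (ht : 0 < t) : (heatKernel ht : Rn n → ℝ) =
    fun x ↦ (4 * π * t) ^ (-(n : ℝ) / 2) * exp (-‖x‖ ^ 2 / (4 * t)) := by
  ext x
  rw [heatKernel_apply, finrank_euclideanSpace_fin]

theorem inv_smul_mem_annulus_of_fourier_dilate_ne_zero {ψ₀ : 𝓢(Rn n, ℝ)} (hψ : IsLPF n ψ₀) {r : ℝ}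
    (hr : 0 < r) (ξ : Rn n) (hξ : 𝓕 (complexify (dilate hr ψ₀)) ξ ≠ 0) :
    r⁻¹ • ξ ∈ Metric.closedBall (0 : Rn n) 2 \ Metric.ball 0 (1 / 2) := by
  have h_comm : complexify (dilate hr ψ₀) = dilate hr (complexify ψ₀) := by
    ext x
    exact (Complex.ofReal_mul _ _).trans (Complex.real_smul).symm
  rw [h_comm, fourier_dilate, fourier_complexify_eq_ftC] at hξ
  obtain ⟨h_lower, h_upper⟩ := hψ.ft_supp _ hξ
  simpa using ⟨h_upper.le, by simpa using h_lower.le⟩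

theorem hasSum_nat_ftC {ψ₀ : 𝓢(Rn n, ℝ)} (hψ : IsLPF n ψ₀) {ξ : Rn n} (hξ : 2 ≤ ‖ξ‖) :
    HasSum (fun k : ℕ ↦ ftC ψ₀ ((2 : ℝ) ^ (-(k : ℤ)) • ξ)) 1 := by
  have hξ₀ : ξ ≠ 0 := norm_pos_iff.1 (two_pos.trans_le hξ)
  have h_inj : Function.Injective fun k : ℕ ↦ (k : ℤ) := Nat.cast_injective
  refine (h_inj.hasSum_iff (f := fun j : ℤ ↦ ftC ψ₀ ((2 : ℝ) ^ (-j) • ξ)) fun j hj ↦ ?_).2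
    (hψ.ft_sum ξ hξ₀)
  by_contra h_ne
  have hj_neg : j < 0 := by
    by_contra! hj₀
    exact hj ⟨j.toNat, Int.toNat_of_nonneg hj₀⟩
  have h_norm := (hψ.ft_supp _ h_ne).2
  rw [norm_smul, Real.norm_of_nonneg (by positivity)] at h_norm
  have h_pow : (1 : ℝ) ≤ 2 ^ (-j) := one_le_zpow₀ one_le_two (by lia)
  nlinarith

theorem norm_le_two_of_fourier_lowPiece_ne_zero {ψ₀ Ψ : 𝓢(Rn n, ℝ)} (hψ : IsLPF n ψ₀)
    (hΨ : IsLowPiece ψ₀ Ψ) {ξ : Rn n} (hξ : 𝓕 (complexify Ψ) ξ ≠ 0) : ‖ξ‖ ≤ 2 := by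
  contrapose! hξ
  rw [fourier_complexify_eq_ftC, hΨ, (hasSum_nat_ftC hψ hξ.le).tsum_eq, sub_self]

end LittlewoodPaley

section Besov
open ContinuousLinearMap (mul)

variable {ψ₀ Ψ : 𝓢(Rn n, ℝ)} {p₁ p₂ : ℝ≥0∞}

theorem besovNorm_le_mul {s₁ s₂ : ℝ} {q : ℝ≥0∞} (hq : q ≠ 0) {f g : Rn n → ℝ} {c : ℝ≥0∞}
    (h_low : eLpNorm (Ψ ⋆[mul ℝ ℝ, volume] f) p₂ volume ≤
      c * eLpNorm (Ψ ⋆[mul ℝ ℝ, volume] g) p₁ volume)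
    (h_high : ∀ j : ℕ, ENNReal.ofReal (2 ^ (j * s₂)) * eLpNorm (lpProj ψ₀ j f) p₂ volume ≤
      c * (ENNReal.ofReal (2 ^ (j * s₁)) * eLpNorm (lpProj ψ₀ j g) p₁ volume)) :
    besovNorm ψ₀ Ψ s₂ p₂ q f ≤ c * besovNorm ψ₀ Ψ s₁ p₁ q g := by
  rw [besovNorm, besovNorm, mul_add]
  refine add_le_add h_low ?_
  split_ifs with hq_top
  · rw [ENNReal.mul_iSup]
    exact iSup_mono h_high
  · have hq_pos : 0 < q.toReal := ENNReal.toReal_pos hq hq_top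
    have hc : c = (c ^ q.toReal) ^ (1 / q.toReal) := by
      rw [one_div, ENNReal.rpow_rpow_inv hq_pos.ne']
    rw [hc, ← ENNReal.mul_rpow_of_nonneg _ _ (by positivity), ← ENNReal.tsum_mul_left]
    gcongr with j
    rw [← ENNReal.mul_rpow_of_nonneg _ _ hq_pos.le]
    exact ENNReal.rpow_le_rpow (h_high j) hq_pos.le

theorem exists_eLpNorm_lowPiece_heatOp_le (hψ : IsLPF n ψ₀) (hΨ : IsLowPiece ψ₀ Ψ)
    (hp₁ : 1 ≤ p₁) (hp₁₂ : p₁ ≤ p₂) :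
    ∃ C : ℝ, 0 < C ∧ ∀ {p : ℝ≥0∞}, 1 ≤ p → ∀ {u : Rn n → ℝ}, MemLp u p → ∀ {t : ℝ}, 0 < t →
      eLpNorm (Ψ ⋆[mul ℝ ℝ, volume] heatOp n t u) p₂ volume ≤
        ENNReal.ofReal C * eLpNorm (Ψ ⋆[mul ℝ ℝ, volume] u) p₁ volume := by
  obtain ⟨C, hC, h⟩ := exists_eLpNorm_heat_le_pow (isCompact_closedBall (0 : Rn n) 2) 0
    (by simp) hp₁ hp₁₂
  refine ⟨C, hC, fun hp _ hu _ ht ↦ ?_⟩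
  have := h one_pos ht Ψ
    (fun ξ hξ ↦ by simpa using norm_le_two_of_fourier_lowPiece_ne_zero hψ hΨ hξ) hp hu
  simpa [heatOp, heatKernel_eq] using this

theorem two_rpow_mul_scale_eq {t : ℝ} (ht : 0 < t) (j s₁ s₂ β : ℝ) :
    (2 : ℝ) ^ (j * s₂) * ((t * (2 ^ j) ^ 2) ^ (-((s₂ - s₁ + β) / 2)) * (2 ^ j) ^ β) =
      t ^ (-((s₂ - s₁ + β) / 2)) * 2 ^ (j * s₁) := by
  have h_exp : j * s₁ = j * s₂ + j * (2 : ℕ) * -((s₂ - s₁ + β) / 2) + j * β := by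
    push_cast
    ring
  rw [Real.mul_rpow ht.le (by positivity), ← Real.rpow_mul_natCast two_pos.le,
    ← Real.rpow_mul two_pos.le, ← Real.rpow_mul two_pos.le, h_exp, Real.rpow_add two_pos,
    Real.rpow_add two_pos]
  ring

theorem exists_eLpNorm_lpProj_heatOp_le (hψ : IsLPF n ψ₀) (hp₁ : 1 ≤ p₁) (hp₁₂ : p₁ ≤ p₂)
    {s₁ s₂ β : ℝ} (hβ : β = n * (p₁⁻¹.toReal - p₂⁻¹.toReal)) (hα : 0 ≤ (s₂ - s₁ + β) / 2) :
    ∃ C : ℝ, 0 < C ∧ ∀ {p : ℝ≥0∞}, 1 ≤ p → ∀ {u : Rn n → ℝ}, MemLp u p → ∀ {t : ℝ}, 0 < t →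
      ∀ j : ℤ, ENNReal.ofReal (2 ^ (j * s₂)) * eLpNorm (lpProj ψ₀ j (heatOp n t u)) p₂ volume ≤
        ENNReal.ofReal (C * t ^ (-((s₂ - s₁ + β) / 2))) *
          (ENNReal.ofReal (2 ^ (j * s₁)) * eLpNorm (lpProj ψ₀ j u) p₁ volume) := by
  have hK : IsCompact (Metric.closedBall (0 : Rn n) 2 \ Metric.ball 0 (1 / 2)) :=
    (isCompact_closedBall 0 2).diff Metric.isOpen_ball
  obtain ⟨C, hC, h⟩ := exists_eLpNorm_heat_le_rpow hK (by simp) hα hp₁ hp₁₂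
  refine ⟨C, hC, fun {p} hp {u} hu {t} ht j ↦ ?_⟩
  have h_scale := h (zpow_pos two_pos j) ht (dilate (zpow_pos two_pos j) ψ₀)
    (inv_smul_mem_annulus_of_fourier_dilate_ne_zero hψ _) hp hu
  rw [← lpKernel_eq_dilate, heatKernel_eq, finrank_euclideanSpace_fin, ← hβ,
    ← Real.rpow_intCast] at h_scale
  calc ENNReal.ofReal (2 ^ (j * s₂)) * eLpNorm (lpProj ψ₀ j (heatOp n t u)) p₂ volume
      ≤ ENNReal.ofReal (2 ^ (j * s₂)) *
          (ENNReal.ofReal (C * ((t * (2 ^ (j : ℝ)) ^ 2) ^ (-((s₂ - s₁ + β) / 2)) *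
            (2 ^ (j : ℝ)) ^ β)) * eLpNorm (lpProj ψ₀ j u) p₁ volume) := by
        gcongr
        exact h_scale
    _ = _ := by
        rw [← mul_assoc, ← mul_assoc (ENNReal.ofReal (C * _)), ← ENNReal.ofReal_mul (by positivity),
          ← ENNReal.ofReal_mul (by positivity), mul_left_comm, two_rpow_mul_scale_eq ht,
          mul_assoc C]

end Besov

theorem besov_heat_smoothing_general {ψ₀ Ψ : 𝓢(Rn n, ℝ)} (hψ : IsLPF n ψ₀) (hΨ : IsLowPiece ψ₀ Ψ)
    {p₁ p₂ : ℝ≥0∞} (hp₁ : 1 ≤ p₁) (hp₁₂ : p₁ ≤ p₂) {s₁ s₂ : ℝ}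
    (hs : s₁ - n * p₁⁻¹.toReal ≤ s₂ - n * p₂⁻¹.toReal) {q : ℝ≥0∞} (hq : q ≠ 0) :
    ∃ C : ℝ, 0 < C ∧ ∀ {p : ℝ≥0∞}, 1 ≤ p → ∀ {u : Rn n → ℝ}, MemLp u p →
      ∀ {t : ℝ}, 0 < t → t ≤ 1 → besovNorm ψ₀ Ψ s₂ p₂ q (heatOp n t u) ≤
        ENNReal.ofReal (C * t ^ (-(s₂ - s₁ + n * p₁⁻¹.toReal - n * p₂⁻¹.toReal) / 2)) *
          besovNorm ψ₀ Ψ s₁ p₁ q u := by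
  set β := n * (p₁⁻¹.toReal - p₂⁻¹.toReal) with hβ
  have hα : 0 ≤ (s₂ - s₁ + β) / 2 := by linarith
  have h_exp : -(s₂ - s₁ + n * p₁⁻¹.toReal - n * p₂⁻¹.toReal) / 2 = -((s₂ - s₁ + β) / 2) := by
    rw [hβ]
    ring
  obtain ⟨C₀, hC₀, h_low⟩ := exists_eLpNorm_lowPiece_heatOp_le hψ hΨ hp₁ hp₁₂
  obtain ⟨C₁, -, h_high⟩ := exists_eLpNorm_lpProj_heatOp_le hψ hp₁ hp₁₂ hβ hα
  refine ⟨max C₀ C₁, by positivity, fun {p} hp {u} hu {t} ht ht₁ ↦ ?_⟩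
  rw [h_exp]
  refine besovNorm_le_mul hq ?_ fun j ↦ ?_
  · have h_one_le : 1 ≤ t ^ (-((s₂ - s₁ + β) / 2)) :=
      one_le_rpow_of_pos_of_le_one_of_nonpos ht ht₁ (neg_nonpos.2 hα)
    grw [h_low hp hu ht, le_mul_of_one_le_right hC₀.le h_one_le, ← le_max_left]
  · have := h_high hp hu ht j
    rw [Int.cast_natCast] at this
    grw [this, ← le_max_right]

/-- Heat kernel smoothing estimate in Besov spaces: for
`1 ≤ p₁ ≤ p₂ < ∞`, `0 < s₁ ≤ s₂`, `q ∈ [1,∞)` and `t ∈ (0,1]`,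
`‖e^{tΔ}u‖_{B^{s₂}_{p₂,q}} ≤ C t^{−(s₂−s₁+n/p₁−n/p₂)/2} ‖u‖_{B^{s₁}_{p₁,q}}`. -/
theorem besov_heat_smoothing
    (n : ℕ) (hn : 1 ≤ n) (ψ₀ Ψ : SchwartzMap (Rn n) ℝ)
    (hψ : IsLPF n ψ₀) (hΨ : IsLowPiece ψ₀ Ψ)
    (p₁ p₂ : ℝ≥0∞) (hp₁ : 1 ≤ p₁) (hp₁₂ : p₁ ≤ p₂) (hp₂ : p₂ < ∞)
    (s₁ s₂ : ℝ) (hs₁ : 0 < s₁) (hs₁₂ : s₁ ≤ s₂)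
    (q : ℝ≥0∞) (hq : 1 ≤ q) (hq' : q < ∞) :
    ∃ C : ℝ, 0 < C ∧ ∀ u : SchwartzMap (Rn n) ℝ, ∀ t : ℝ, 0 < t → t ≤ 1 →
      besovNorm ψ₀ Ψ s₂ p₂ q (heatOp n t (fun x => u x))
        ≤ ENNReal.ofReal
            (C * t ^ (-(s₂ - s₁ + (n:ℝ)/p₁.toReal - (n:ℝ)/p₂.toReal)/2)) *
          besovNorm ψ₀ Ψ s₁ p₁ q (fun x => u x) := by
  obtain ⟨C, hC, h⟩ := besov_heat_smoothing_general (s₁ := s₁) (s₂ := s₂) hψ hΨ hp₁ hp₁₂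
    (by grw [hs₁₂, toReal_inv_le_toReal_inv hp₁ hp₁₂]) (one_pos.trans_le hq).ne'
  exact ⟨C, hC, fun u t ht ht₁ ↦ by
    simpa only [ENNReal.toReal_inv, ← div_eq_mul_inv] using h hp₁ (u.memLp p₁) ht ht₁⟩
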